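/- (Maximum principle under Neumann boundary conditions for parabolic systems.) Assume the setting below, together with Requirement 1 and Requirement 2. If the boundary condition D_x f(t,x)[ν(x)] = 0 holds for all (t,x) ∈ (0,T) × ∂M, where D_x f(t,x)[ν(x)] denotes the spatial derivative (taken within M) of the map y ↦ f(t,y) at x applied to ν(x), then f(t,x) lies in W for all (t,x) ∈ [0,T] × M. -/

import Mathlib

open scoped RealInnerProductSpace

/-- `lam` is a supporting vector for `W` at `ω`: it is a unit vector with
`⟪lam, σ⟫ ≤ ⟪lam, ω⟫` for all `σ ∈ W`. -/
def IsSupportingVector {m : ℕ} (W : Set (EuclideanSpace ℝ (Fin m)))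
    (ω lam : EuclideanSpace ℝ (Fin m)) : Prop :=
  ‖lam‖ = 1 ∧ ∀ σ ∈ W, ⟪lam, σ⟫ ≤ ⟪lam, ω⟫

lemma aux_one_dim {k k' : ℝ → ℝ} {a ε : ℝ} (hε : 0 < ε)
    (hk : ∀ u ∈ Set.Icc (0:ℝ) ε, HasDerivWithinAt k (k' u) (Set.Icc 0 ε) u)
    (hk' : HasDerivWithinAt k' a (Set.Icc 0 ε) 0)
    (hmax : ∀ u ∈ Set.Icc (0:ℝ) ε, k u ≤ k 0) :
    k' 0 ≤ 0 ∧ (k' 0 = 0 → a ≤ 0) := by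
  have h0 : (0:ℝ) ∈ Set.Icc (0:ℝ) ε := ⟨le_rfl, hε.le⟩
  constructor
  · have hl : IsLocalMaxOn k (Set.Icc 0 ε) 0 :=
      (show IsMaxOn k (Set.Icc 0 ε) 0 from hmax).localize
    have hy : ε ∈ posTangentConeAt (Set.Icc (0:ℝ) ε) 0 := by
      apply mem_posTangentConeAt_of_segment_subset
      rw [zero_add, segment_eq_Icc hε.le]
    have := hl.hasFDerivWithinAt_nonpos (hk 0 h0).hasFDerivWithinAt hy
    simp at this
    nlinarith
  · intro hk0
    by_contra! ha
    rw [hasDerivWithinAt_iff_tendsto_slope] at hk'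
    have hev := hk'.eventually (lt_mem_nhds ha)
    rw [eventually_nhdsWithin_iff, Metric.eventually_nhds_iff] at hev
    obtain ⟨δ, hδ, hev⟩ := hev
    set η := min ε (δ / 2) with hη
    have hη0 : 0 < η := by positivity
    have hηε : η ≤ ε := min_le_left _ _
    have hηδ : η ≤ δ / 2 := min_le_right _ _
    obtain ⟨c, hc, hceq⟩ := exists_hasDerivAt_eq_slope k k' hη0
      (fun u hu => ((hk u ⟨hu.1, hu.2.trans hηε⟩).continuousWithinAt).mono
        (Set.Icc_subset_Icc_right hηε))
      (fun u hu => (hk u ⟨hu.1.le, hu.2.le.trans hηε⟩).hasDerivAt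
        (Icc_mem_nhds hu.1 (hu.2.trans_le hηε)))
    have h1 : 0 < slope k' 0 c := by
      apply hev
      · rw [Real.dist_eq, sub_zero, abs_of_pos hc.1]; linarith [hc.2]
      · exact ⟨⟨hc.1.le, hc.2.le.trans hηε⟩, hc.1.ne'⟩
    rw [slope_def_field, hk0, sub_zero, sub_zero] at h1
    have h2 : 0 < k' c := by
      have := mul_pos h1 hc.1
      rwa [div_mul_cancel₀ _ hc.1.ne'] at this
    have h3 := hmax η ⟨hη0.le, hηε⟩
    have h4 : (k η - k 0) / (η - 0) ≤ 0 := by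
      apply div_nonpos_of_nonpos_of_nonneg <;> linarith
    linarith

lemma aux_dir {E F : Type*} [NormedAddCommGroup E] [InnerProductSpace ℝ E]
    [NormedAddCommGroup F] [InnerProductSpace ℝ F]
    {M : Set E} {f : E → F} {Df : E → E →L[ℝ] F} {D2 : E →L[ℝ] E →L[ℝ] F} {x e : E} {lam : F}
    (hD : ∀ y ∈ M, HasFDerivWithinAt f (Df y) M y) (hD2 : HasFDerivWithinAt Df D2 M x)
    (hmax : ∀ y ∈ M, ⟪lam, f y⟫ ≤ ⟪lam, f x⟫)
    {ε : ℝ} (hε : 0 < ε) (hseg : ∀ u ∈ Set.Icc (0:ℝ) ε, x + u • e ∈ M) :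
    ⟪lam, Df x e⟫ ≤ 0 ∧ (⟪lam, Df x e⟫ = 0 → ⟪lam, D2 e e⟫ ≤ 0) := by
  have hline : ∀ u : ℝ, HasDerivWithinAt (fun u : ℝ => x + u • e) e (Set.Icc 0 ε) u := by
    intro u
    have := (((hasDerivAt_id u).smul_const e).const_add x).hasDerivWithinAt (s := Set.Icc 0 ε)
    simpa using this
  have key := aux_one_dim (k := fun u => ⟪lam, f (x + u • e)⟫)
    (k' := fun u => ⟪lam, Df (x + u • e) e⟫) (a := ⟪lam, D2 e e⟫) hε ?_ ?_ ?_
  · simpa using key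
  · intro u hu
    have := (hD _ (hseg u hu)).comp_hasDerivWithinAt u (hline u) hseg
    exact (innerSL ℝ lam).hasFDerivAt.comp_hasDerivWithinAt u this
  · have hD2' : HasFDerivWithinAt Df D2 M (x + (0:ℝ) • e) := by simpa using hD2
    have h1 := hD2'.comp_hasDerivWithinAt 0 (hline 0) hseg
    have h2 := h1.clm_apply (hasDerivWithinAt_const (0:ℝ) (Set.Icc 0 ε) e)
    have h3 := (innerSL ℝ lam).hasFDerivAt.comp_hasDerivWithinAt 0 h2
    refine HasDerivWithinAt.congr_deriv (f := fun u : ℝ => ⟪lam, Df (x + u • e) e⟫) h3 ?_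
    simp
  · intro u hu
    simpa using hmax _ (hseg u hu)

lemma aux_max {E F : Type*} [NormedAddCommGroup E] [InnerProductSpace ℝ E]
    [NormedAddCommGroup F] [InnerProductSpace ℝ F]
    {M : Set E} (hMcl : IsClosed M)
    {f : E → F} {Df : E → E →L[ℝ] F} {D2 : E →L[ℝ] E →L[ℝ] F} {x : E} {lam : F}
    (hx : x ∈ M)
    (hD : ∀ y ∈ M, HasFDerivWithinAt f (Df y) M y) (hD2 : HasFDerivWithinAt Df D2 M x)
    (hmax : ∀ y ∈ M, ⟪lam, f y⟫ ≤ ⟪lam, f x⟫)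
    (ν : E) (hν1 : x ∈ frontier M → ‖ν‖ = 1)
    (hν2 : x ∈ frontier M → ∀ e : E, ⟪e, ν⟫ < 0 →
      ∃ ε > (0 : ℝ), ∀ u ∈ Set.Icc (0 : ℝ) ε, x + u • e ∈ M)
    (hbd : x ∈ frontier M → Df x ν = 0) :
    (∀ e, ⟪lam, Df x e⟫ = 0) ∧ ∀ e, ⟪lam, D2 e e⟫ ≤ 0 := by
  by_cases hfr : x ∈ frontier M
  · specialize hν1 hfr
    specialize hν2 hfr
    specialize hbd hfr
    have hsub : ∀ e : E, ∀ s : ℝ, ⟪e - s • ν, ν⟫ = ⟪e, ν⟫ - s := by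
      intro e s
      rw [inner_sub_left, real_inner_smul_left, real_inner_self_eq_norm_sq, hν1]; ring
    have h1 : ∀ e, ⟪lam, Df x e⟫ ≤ 0 := by
      intro e
      obtain ⟨ε, hε, hseg⟩ := hν2 (e - (⟪e, ν⟫ + 1) • ν) (by rw [hsub]; linarith)
      have := (aux_dir hD hD2 hmax hε hseg).1
      simpa [hbd] using this
    have h2 : ∀ e, ⟪lam, Df x e⟫ = 0 := by
      intro e
      have := h1 (-e)
      simp at this
      exact le_antisymm (h1 e) this
    refine ⟨h2, fun e => ?_⟩
    have h3 : ∀ e, ⟪e, ν⟫ < 0 → ⟪lam, D2 e e⟫ ≤ 0 := by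
      intro e he
      obtain ⟨ε, hε, hseg⟩ := hν2 e he
      exact (aux_dir hD hD2 hmax hε hseg).2 (h2 e)
    rcases lt_trichotomy ⟪e, ν⟫ 0 with h | h | h
    · exact h3 e h
    · have hc : Continuous (fun s : ℝ => ⟪lam, D2 (e - s • ν) (e - s • ν)⟫) := by fun_prop
      have ht : Filter.Tendsto (fun s : ℝ => ⟪lam, D2 (e - s • ν) (e - s • ν)⟫)
          (nhdsWithin 0 (Set.Ioi 0)) (nhds ⟪lam, D2 e e⟫) := by
        have := (hc.tendsto 0).mono_left (nhdsWithin_le_nhds (s := Set.Ioi 0))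
        simpa using this
      refine le_of_tendsto ht ?_
      filter_upwards [self_mem_nhdsWithin] with s hs
      apply h3
      rw [hsub, h]
      simpa using hs
    · have := h3 (-e) (by rw [inner_neg_left]; linarith)
      simpa using this
  · have hint : x ∈ interior M := by
      rw [hMcl.frontier_eq] at hfr
      by_contra h
      exact hfr ⟨hx, h⟩
    have hseg : ∀ e : E, ∃ ε > (0 : ℝ), ∀ u ∈ Set.Icc (0 : ℝ) ε, x + u • e ∈ M := by
      intro e
      have hc : Continuous (fun u : ℝ => x + u • e) := by fun_prop
      have hmem : ∀ᶠ u in nhds (0:ℝ), x + u • e ∈ M := by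
        apply hc.continuousAt.eventually_mem
        simpa using mem_interior_iff_mem_nhds.1 hint
      obtain ⟨δ, hδ, h⟩ := Metric.eventually_nhds_iff.1 hmem
      refine ⟨δ / 2, by positivity, fun u hu => h ?_⟩
      rw [Real.dist_eq, sub_zero, abs_of_nonneg hu.1]
      linarith [hu.2]
    have h1 : ∀ e, ⟪lam, Df x e⟫ ≤ 0 := by
      intro e
      obtain ⟨ε, hε, hs⟩ := hseg e
      exact (aux_dir hD hD2 hmax hε hs).1
    have h2 : ∀ e, ⟪lam, Df x e⟫ = 0 := by
      intro e
      have := h1 (-e)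
      simp at this
      exact le_antisymm (h1 e) this
    refine ⟨h2, fun e => ?_⟩
    obtain ⟨ε, hε, hs⟩ := hseg e
    exact (aux_dir hD hD2 hmax hε hs).2 (h2 e)

lemma aux_proj {m : ℕ} {W : Set (EuclideanSpace ℝ (Fin m))}
    (hWne : W.Nonempty) (hWcl : IsClosed W) (hWconv : Convex ℝ W)
    (p : EuclideanSpace ℝ (Fin m)) (hp : 0 < Metric.infDist p W) :
    ∃ ω ∈ frontier W, ∃ lam, IsSupportingVector W ω lam ∧ ‖p - ω‖ = Metric.infDist p W ∧
      ⟪lam, p - ω⟫ = Metric.infDist p W ∧ ∀ q, ⟪lam, q - ω⟫ ≤ Metric.infDist q W := by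
  obtain ⟨ω, hω, hmin⟩ := exists_norm_eq_iInf_of_complete_convex hWne hWcl.isComplete hWconv p
  have hin := (norm_eq_iInf_iff_real_inner_le_zero hWconv hω).1 hmin
  have hd : ‖p - ω‖ = Metric.infDist p W := by
    rw [hmin, Metric.infDist_eq_iInf]; simp only [dist_eq_norm]
  have hpos : 0 < ‖p - ω‖ := hd ▸ hp
  set lam := ‖p - ω‖⁻¹ • (p - ω) with hlam
  have hn : ‖lam‖ = 1 := by
    rw [hlam, norm_smul, norm_inv, norm_norm, inv_mul_cancel₀ hpos.ne']
  have hsup : ∀ σ ∈ W, ⟪lam, σ⟫ ≤ ⟪lam, ω⟫ := by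
    intro σ hσ
    have h1 : ⟪lam, σ - ω⟫ ≤ 0 := by
      rw [hlam, real_inner_smul_left]
      exact mul_nonpos_of_nonneg_of_nonpos (by positivity) (hin σ hσ)
    rw [inner_sub_right] at h1
    linarith
  refine ⟨ω, ?_, lam, ⟨hn, hsup⟩, hd, ?_, ?_⟩
  · rw [hWcl.frontier_eq]
    refine ⟨hω, fun hint => ?_⟩
    have hc : Continuous (fun u : ℝ => ω + u • lam) := by fun_prop
    have hmem : ∀ᶠ u in nhds (0:ℝ), ω + u • lam ∈ W := by
      apply hc.continuousAt.eventually_mem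
      simpa using mem_interior_iff_mem_nhds.1 hint
    obtain ⟨δ, hδ, h⟩ := Metric.eventually_nhds_iff.1 hmem
    have h1 := hsup _ (h (y := δ / 2) (by
      rw [Real.dist_eq, sub_zero, abs_of_pos (by positivity)]; linarith))
    rw [inner_add_right, real_inner_smul_right, real_inner_self_eq_norm_sq, hn] at h1
    linarith
  · rw [← hd, hlam, real_inner_smul_left, real_inner_self_eq_norm_sq]
    field_simp
  · intro q
    refine (Metric.le_infDist hWne).2 fun σ hσ => ?_
    have h1 := real_inner_le_norm lam (q - σ)
    rw [hn, one_mul, ← dist_eq_norm] at h1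
    have h2 := hsup σ hσ
    rw [inner_sub_right] at h1 ⊢
    linarith

/-- Maximum principle under Neumann boundary conditions for parabolic systems. -/
theorem stmt_6
    (n m : ℕ)
    -- M is the closure of a bounded domain (bounded connected open set) in ℝⁿ
    (Ω : Set (EuclideanSpace ℝ (Fin n)))
    (hΩopen : IsOpen Ω) (hΩconn : IsConnected Ω) (hΩbdd : Bornology.IsBounded Ω)
    (M : Set (EuclideanSpace ℝ (Fin n))) (hM : M = closure Ω)
    (T : ℝ) (hT : 0 < T)
    -- W is a nonempty closed convex subset of ℝᵐ
    (W : Set (EuclideanSpace ℝ (Fin m)))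
    (hWne : W.Nonempty) (hWcl : IsClosed W) (hWconv : Convex ℝ W)
    -- φ is Lipschitz in v, uniformly in (t,x), on every compact set U ⊆ ℝᵐ
    (φ : ℝ → EuclideanSpace ℝ (Fin n) → EuclideanSpace ℝ (Fin m) →
      EuclideanSpace ℝ (Fin m))
    (hφ : ∀ U : Set (EuclideanSpace ℝ (Fin m)), IsCompact U → ∃ C > (0 : ℝ),
      ∀ t ∈ Set.Ioo (0 : ℝ) T, ∀ x ∈ M, ∀ v₁ ∈ U, ∀ v₂ ∈ U,
        ‖φ t x v₁ - φ t x v₂‖ ≤ C * ‖v₁ - v₂‖)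
    -- drift coefficients
    (ζ : Fin n → ℝ → EuclideanSpace ℝ (Fin n) → ℝ)
    -- the solution f, its time derivative f', its first and second spatial
    -- derivatives (taken within M)
    (f f' : ℝ → EuclideanSpace ℝ (Fin n) → EuclideanSpace ℝ (Fin m))
    (Df : ℝ → EuclideanSpace ℝ (Fin n) →
      (EuclideanSpace ℝ (Fin n) →L[ℝ] EuclideanSpace ℝ (Fin m)))
    (D2f : ℝ → EuclideanSpace ℝ (Fin n) →
      (EuclideanSpace ℝ (Fin n) →L[ℝ]
        (EuclideanSpace ℝ (Fin n) →L[ℝ] EuclideanSpace ℝ (Fin m))))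
    (hfcont : ContinuousOn (fun p : ℝ × EuclideanSpace ℝ (Fin n) => f p.1 p.2)
      (Set.Icc 0 T ×ˢ M))
    (hft : ∀ t ∈ Set.Ioo (0 : ℝ) T, ∀ x ∈ M,
      HasDerivAt (fun s => f s x) (f' t x) t)
    (hftcont : ∀ x ∈ M, ContinuousOn (fun t => f' t x) (Set.Ioo (0 : ℝ) T))
    (hDf : ∀ t ∈ Set.Ioo (0 : ℝ) T, ∀ x ∈ M,
      HasFDerivWithinAt (f t) (Df t x) M x)
    (hD2f : ∀ t ∈ Set.Ioo (0 : ℝ) T, ∀ x ∈ M,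
      HasFDerivWithinAt (Df t) (D2f t x) M x)
    -- the parabolic system
    (hPDE : ∀ t ∈ Set.Ioo (0 : ℝ) T, ∀ x ∈ M,
      f' t x =
        (∑ j : Fin n, D2f t x (EuclideanSpace.single j 1) (EuclideanSpace.single j 1))
        + (∑ j : Fin n, ζ j t x • Df t x (EuclideanSpace.single j 1))
        + φ t x (f t x))
    -- the outward unit normal on the boundary of M
    (ν : EuclideanSpace ℝ (Fin n) → EuclideanSpace ℝ (Fin n))
    (hν1 : ∀ x ∈ frontier M, ‖ν x‖ = 1)
    (hν2 : ∀ x ∈ frontier M, ∀ e : EuclideanSpace ℝ (Fin n), ⟪e, ν x⟫ < 0 →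
      ∃ ε > (0 : ℝ), ∀ u ∈ Set.Icc (0 : ℝ) ε, x + u • e ∈ M)
    -- Requirement 1: the initial value lies in W
    (hreq1 : ∀ x ∈ M, f 0 x ∈ W)
    -- Requirement 2: φ points into W on the boundary of W
    (hreq2 : ∀ t ∈ Set.Ioo (0 : ℝ) T, ∀ x ∈ M, ∀ ω ∈ frontier W,
      ∀ lam, IsSupportingVector W ω lam → ⟪lam, φ t x ω⟫ ≤ 0)
    -- Neumann boundary condition: D_x f(t,x)[ν(x)] = 0 on (0,T) × ∂M
    (hbd : ∀ t ∈ Set.Ioo (0 : ℝ) T, ∀ x ∈ frontier M, Df t x (ν x) = 0) :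
    -- conclusion: f lies in W everywhere on [0,T] × M
    ∀ t ∈ Set.Icc (0 : ℝ) T, ∀ x ∈ M, f t x ∈ W := by
  have hMcl : IsClosed M := hM ▸ isClosed_closure
  have hMcp : IsCompact M := by
    rw [hM]; exact hΩbdd.isCompact_closure
  have main : ∀ t ∈ Set.Ico (0:ℝ) T, ∀ x ∈ M, f t x ∈ W := by
    intro t₁ ht₁ x₁ hx₁
    by_contra hnot
    have hd1 : 0 < Metric.infDist (f t₁ x₁) W :=
      (hWcl.notMem_iff_infDist_pos hWne).1 hnot
    obtain ⟨w0, hw0⟩ := hWne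
    -- bound
    have hKcp : IsCompact (Set.Icc (0:ℝ) T ×ˢ M) := isCompact_Icc.prod hMcp
    obtain ⟨R, hR⟩ := hKcp.exists_bound_of_continuousOn hfcont
    obtain ⟨C, hC, hLip⟩ := hφ (Metric.closedBall 0 (2 * R + ‖w0‖)) (isCompact_closedBall _ _)
    set L := C + 1 with hL
    have hsub : Set.Icc (0:ℝ) t₁ ×ˢ M ⊆ Set.Icc (0:ℝ) T ×ˢ M :=
      Set.prod_mono (Set.Icc_subset_Icc_right ht₁.2.le) le_rfl
    have hcont : ContinuousOn (fun p : ℝ × EuclideanSpace ℝ (Fin n) =>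
        Real.exp (-L * p.1) * Metric.infDist (f p.1 p.2) W) (Set.Icc (0:ℝ) t₁ ×ˢ M) := by
      apply ContinuousOn.mul
      · fun_prop
      · exact (Metric.continuous_infDist_pt W).comp_continuousOn (hfcont.mono hsub)
    have hmem1 : (t₁, x₁) ∈ Set.Icc (0:ℝ) t₁ ×ˢ M := ⟨⟨ht₁.1, le_rfl⟩, hx₁⟩
    obtain ⟨⟨t₀, x₀⟩, ⟨ht₀, hx₀⟩, hmax⟩ :=
      (isCompact_Icc.prod hMcp).exists_isMaxOn ⟨_, hmem1⟩ hcont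
    simp only at ht₀ hx₀
    have hmax' : ∀ t ∈ Set.Icc (0:ℝ) t₁, ∀ x ∈ M,
        Real.exp (-L * t) * Metric.infDist (f t x) W ≤
        Real.exp (-L * t₀) * Metric.infDist (f t₀ x₀) W :=
      fun t ht x hx => hmax (show (t, x) ∈ Set.Icc (0:ℝ) t₁ ×ˢ M from ⟨ht, hx⟩)
    have hd0 : 0 < Metric.infDist (f t₀ x₀) W := by
      have h1 := hmax' t₁ ⟨ht₁.1, le_rfl⟩ x₁ hx₁
      have h2 : 0 < Real.exp (-L * t₁) * Metric.infDist (f t₁ x₁) W := by positivity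
      exact pos_of_mul_pos_right (h2.trans_le h1) (Real.exp_pos _).le
    have ht0pos : 0 < t₀ := by
      rcases ht₀.1.eq_or_lt with h | h
      · rw [← h, Metric.infDist_zero_of_mem (hreq1 x₀ hx₀)] at hd0
        exact absurd hd0 (lt_irrefl _)
      · exact h
    have ht0T : t₀ ∈ Set.Ioo 0 T := ⟨ht0pos, ht₀.2.trans_lt ht₁.2⟩
    obtain ⟨ω, hωf, lam, hsup, hnd, hid, hle⟩ :=
      aux_proj ⟨w0, hw0⟩ hWcl hWconv (f t₀ x₀) hd0
    set d := Metric.infDist (f t₀ x₀) W with hd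
    -- space
    have hspace := aux_max hMcl (lam := lam) hx₀ (hDf t₀ ht0T) (hD2f t₀ ht0T x₀ hx₀)
      (by
        intro y hy
        have h1 := hmax' t₀ ht₀ y hy
        have h2 := le_of_mul_le_mul_left h1 (Real.exp_pos _)
        have h3 := hle (f t₀ y)
        rw [inner_sub_right] at h3 hid
        linarith) (ν x₀) (hν1 x₀) (hν2 x₀) (hbd t₀ ht0T x₀)
    -- time
    have htime : L * d ≤ ⟪lam, f' t₀ x₀⟫ := by
      have hder : HasDerivAt (fun s => Real.exp (-L * s) * ⟪lam, f s x₀ - ω⟫)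
          (Real.exp (-L * t₀) * (-L) * ⟪lam, f t₀ x₀ - ω⟫ +
            Real.exp (-L * t₀) * ⟪lam, f' t₀ x₀⟫) t₀ := by
        apply HasDerivAt.mul
        · have := ((hasDerivAt_id t₀).const_mul (-L)).exp
          simpa using this
        · exact (innerSL ℝ lam).hasFDerivAt.comp_hasDerivAt t₀
            ((hft t₀ ht0T x₀ hx₀).sub_const ω)
      have hl : IsLocalMaxOn (fun s => Real.exp (-L * s) * ⟪lam, f s x₀ - ω⟫)
          (Set.Icc 0 t₀) t₀ := by
        refine IsMaxOn.localize fun s hs => ?_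
        have h1 := hmax' s ⟨hs.1, hs.2.trans ht₀.2⟩ x₀ hx₀
        simp only [Set.mem_ofPred_eq]
        rw [hid]
        exact (mul_le_mul_of_nonneg_left (hle _) (Real.exp_pos _).le).trans h1
      have hy : (-t₀) ∈ posTangentConeAt (Set.Icc (0:ℝ) t₀) t₀ := by
        apply mem_posTangentConeAt_of_segment_subset
        rw [add_neg_cancel, segment_symm, segment_eq_Icc ht0pos.le]
      have h := hl.hasFDerivWithinAt_nonpos hder.hasDerivWithinAt.hasFDerivWithinAt hy
      simp only [ContinuousLinearMap.toSpanSingleton_apply, smul_eq_mul] at h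
      rw [hid] at h
      have h2 : 0 ≤ Real.exp (-L * t₀) * (⟪lam, f' t₀ x₀⟫ - L * d) := by nlinarith
      have h3 := nonneg_of_mul_nonneg_right h2 (Real.exp_pos _)
      linarith
    -- pde
    have hfR : ‖f t₀ x₀‖ ≤ R := hR (t₀, x₀) ⟨⟨ht0pos.le, ht0T.2.le⟩, hx₀⟩
    have hdR : d ≤ R + ‖w0‖ := by
      have h1 := Metric.infDist_le_dist_of_mem (x := f t₀ x₀) hw0
      rw [dist_eq_norm] at h1
      have h2 := norm_sub_le (f t₀ x₀) w0
      linarith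
    have hωR : ‖ω‖ ≤ 2 * R + ‖w0‖ := by
      have h1 := norm_sub_le (f t₀ x₀) (f t₀ x₀ - ω)
      rw [sub_sub_cancel] at h1
      linarith
    have hL1 := hLip t₀ ht0T x₀ hx₀ (f t₀ x₀)
      (by rw [mem_closedBall_zero_iff]; linarith [norm_nonneg w0, norm_nonneg (f t₀ x₀)]) ω
      (by rwa [mem_closedBall_zero_iff])
    rw [hnd] at hL1
    have hφ1 : ⟪lam, φ t₀ x₀ (f t₀ x₀)⟫ ≤ C * d := by
      have h1 := real_inner_le_norm lam (φ t₀ x₀ (f t₀ x₀) - φ t₀ x₀ ω)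
      rw [hsup.1, one_mul, inner_sub_right] at h1
      have h2 := hreq2 t₀ ht0T x₀ hx₀ ω hωf lam hsup
      linarith
    have hfin : ⟪lam, f' t₀ x₀⟫ ≤ C * d := by
      rw [hPDE t₀ ht0T x₀ hx₀, inner_add_right, inner_add_right, inner_sum, inner_sum]
      have h1 : ∑ j : Fin n, ⟪lam, D2f t₀ x₀ (EuclideanSpace.single j 1)
          (EuclideanSpace.single j 1)⟫ ≤ 0 := Finset.sum_nonpos fun j _ => hspace.2 _
      have h2 : ∑ j : Fin n, ⟪lam, ζ j t₀ x₀ • Df t₀ x₀ (EuclideanSpace.single j 1)⟫ = 0 :=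
        Finset.sum_eq_zero fun j _ => by rw [real_inner_smul_right, hspace.1, mul_zero]
      linarith
    rw [hL] at htime
    linarith
  intro t ht x hx
  have hmaps : Set.MapsTo (fun s => f s x) (Set.Ico 0 T) W := fun s hs => main s hs x hx
  have hc : ContinuousOn (fun s => f s x) (closure (Set.Ico 0 T)) := by
    rw [closure_Ico hT.ne]
    exact hfcont.comp (f := fun s : ℝ => (s, x)) (by fun_prop) fun s hs => ⟨hs, hx⟩
  have h := hmaps.closure_of_continuousOn hc
  rw [closure_Ico hT.ne, hWcl.closure_eq] at h
  exact h ht
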